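/- There exists a connected simple graph G with chromatic number equal to ω such that the complete graph K_ω on countably many vertices is not a minor of G. In particular, Hadwiger's conjecture (that K_{χ(G)} is a minor of G for every graph G) fails for graphs with infinite chromatic number. -/

import Mathlib

/-!
Take the disjoint union of the finite complete graphs and join an extra vertex to everything. The
result is connected, and it needs infinitely many colors because it contains every finite clique.
Suppose `K_ω` were a minor. Discarding the at most one branch set through the extra vertex, the
remaining branch sets are connected and pairwise adjacent, so they all lie in a single finite
clique. But only finitely many disjoint nonempty sets fit there.
-/

open SimpleGraph Function

theorem finite_setOf_inter_nonempty_of_pairwise_disjoint {ι α : Type*} {S : ι → Set α}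
    (hS : Pairwise (Disjoint on S)) {T : Set α} (hT : T.Finite) :
    {i | (S i ∩ T).Nonempty}.Finite := by
  have hsub (x : α) : {i | x ∈ S i}.Subsingleton := fun _ hi _ hj ↦
    hS.eq (Set.not_disjoint_iff.2 ⟨x, hi, hj⟩)
  refine (hT.biUnion fun x _ ↦ (hsub x).finite).subset ?_
  rintro i ⟨x, hxS, hxT⟩
  exact Set.mem_biUnion hxT hxS

section CompleteMinor

variable {ι V : Type*} {G : SimpleGraph V} {K : Set V}

theorem subset_componentCompl_of_preconnected {S : Set V} (hS : (G.induce S).Preconnected)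
    (hSK : Disjoint S K) {C : G.ComponentCompl K} (hSC : (S ∩ C).Nonempty) : S ⊆ C := by
  obtain ⟨x, hxS, hxK, rfl⟩ := hSC
  intro y hyS
  refine ⟨hSK.notMem_of_mem_left hyS, ConnectedComponent.sound ?_⟩
  exact (hS ⟨y, hyS⟩ ⟨x, hxS⟩).map (induceHom Hom.id hSK.subset_compl_right)

/-- The sets `S i` are the branch sets of a complete minor of `G` indexed by `ι`, so that `K_α` is a
minor of `G` when such a family exists with `ι` of cardinality `α`. -/
structure IsCompleteMinorModel (G : SimpleGraph V) (S : ι → Set V) : Prop where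
  nonempty (i : ι) : (S i).Nonempty
  connected (i : ι) : (G.induce (S i)).Connected
  disjoint : Pairwise (Disjoint on S)
  adj : Pairwise fun i j ↦ ∃ s ∈ S i, ∃ t ∈ S j, G.Adj s t

namespace IsCompleteMinorModel

variable {S : ι → Set V}

theorem inter_componentCompl_nonempty (hS : IsCompleteMinorModel G S) {i j : ι}
    (hj : Disjoint (S j) K) {C : G.ComponentCompl K} (hiC : S i ⊆ C) : (S j ∩ C).Nonempty := by
  obtain rfl | hij := eq_or_ne i j
  · rw [Set.inter_eq_left.2 hiC]
    exact hS.nonempty i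
  · obtain ⟨s, hs, t, ht, hst⟩ := hS.adj hij
    exact ⟨t, ht, ComponentCompl.mem_of_adj s t (hiC hs) (hj.notMem_of_mem_left ht) hst⟩

theorem finite_of_finite_componentCompl (hS : IsCompleteMinorModel G S) (hK : K.Finite)
    (hC : ∀ C : G.ComponentCompl K, (C : Set V).Finite) : Finite ι := by
  have hmeetK := finite_setOf_inter_nonempty_of_pairwise_disjoint hS.disjoint hK
  by_cases h : ∃ i, Disjoint (S i) K
  · obtain ⟨i, hi⟩ := h
    obtain ⟨x, hx⟩ := hS.nonempty i
    let C : G.ComponentCompl K := G.componentComplMk (hi.notMem_of_mem_left hx)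
    have hiC : S i ⊆ C := subset_componentCompl_of_preconnected (hS.connected i).preconnected hi
      ⟨x, hx, G.componentComplMk_mem _⟩
    have hmeetC := finite_setOf_inter_nonempty_of_pairwise_disjoint hS.disjoint (hC C)
    refine Set.finite_univ_iff.1 ((hmeetK.union hmeetC).subset fun j _ ↦ ?_)
    by_cases hj : Disjoint (S j) K
    · exact Or.inr (hS.inter_componentCompl_nonempty hj hiC)
    · exact Or.inl (Set.not_disjoint_iff_nonempty_inter.1 hj)
  · refine Set.finite_univ_iff.1 (hmeetK.subset fun j _ ↦ ?_)
    exact Set.not_disjoint_iff_nonempty_inter.1 fun hj ↦ h ⟨j, hj⟩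

end IsCompleteMinorModel

end CompleteMinor

section ConeGraph

variable {V : Type*}

/-- The cone over the base graph `G`: the vertex `none` is added to `G` and joined to all vertices
of `G`. -/
def coneGraph (G : SimpleGraph V) : SimpleGraph (Option V) :=
  G.map Embedding.some ⊔ starGraph none

namespace coneGraph

variable {G : SimpleGraph V}

@[simp]
theorem adj_some_some {u v : V} : (coneGraph G).Adj (some u) (some v) ↔ G.Adj u v := by
  have hmap : (G.map Embedding.some).Adj (some u) (some v) ↔ G.Adj u v :=
    map_adj_apply (f := Embedding.some)
  simpa [coneGraph] using hmap

theorem connected (G : SimpleGraph V) : (coneGraph G).Connected :=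
  (connected_starGraph none).mono le_sup_right

theorem colorable_base {n : ℕ} (h : (coneGraph G).Colorable n) : G.Colorable n :=
  h.of_hom ⟨some, adj_some_some.2⟩

theorem exists_componentCompl_subset_image_supp (C : (coneGraph G).ComponentCompl {none}) :
    ∃ D : G.ConnectedComponent, (C : Set (Option V)) ⊆ some '' D.supp := by
  let f : (coneGraph G).induce {none}ᶜ →g G :=
    { toFun v := v.1.get (Option.isSome_iff_ne_none.2 v.2)
      map_rel' {u v} h := by
        rw [← adj_some_some, Option.some_get, Option.some_get]
        exact h }
  refine ⟨C.map f, ?_⟩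
  rintro v ⟨hv, rfl⟩
  exact ⟨f ⟨v, hv⟩, rfl, Option.some_get _⟩

theorem finite_componentCompl (hG : ∀ D : G.ConnectedComponent, D.supp.Finite)
    (C : (coneGraph G).ComponentCompl {none}) : (C : Set (Option V)).Finite := by
  obtain ⟨D, hD⟩ := exists_componentCompl_subset_image_supp C
  exact ((hG D).image some).subset hD

end coneGraph

end ConeGraph

section DisjointCliques

variable {ι : Type*}

/-- The disjoint union of the complete graphs on the vertex sets `V i`, encoded as the complement of
the complete multipartite graph with parts `V i`. -/
def disjointCliques (V : ι → Type*) : SimpleGraph (Σ i, V i) :=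
  (completeMultipartiteGraph V)ᶜ

namespace disjointCliques

variable {V : ι → Type*}

theorem adj_iff {v w : Σ i, V i} : (disjointCliques V).Adj v w ↔ v ≠ w ∧ v.1 = w.1 := by
  simp [disjointCliques]

theorem card_le_of_colorable {n : ℕ} (h : (disjointCliques V).Colorable n) (i : ι) :
    Nat.card (V i) ≤ n :=
  h.card_le_of_pairwise_adj (Sigma.mk i) fun _ _ hne ↦ adj_iff.2 ⟨by simpa using hne, rfl⟩

theorem fst_eq_of_reachable {v w : Σ i, V i} (h : (disjointCliques V).Reachable v w) :
    v.1 = w.1 := by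
  obtain ⟨p⟩ := h
  induction p with
  | nil => rfl
  | cons hadj _ ih => exact (adj_iff.1 hadj).2.trans ih

theorem finite_supp [∀ i, Finite (V i)] (D : (disjointCliques V).ConnectedComponent) :
    D.supp.Finite := by
  obtain ⟨⟨i, x⟩, rfl⟩ := D.exists_rep
  refine (Set.finite_range (Sigma.mk i)).subset fun w hw ↦ ?_
  obtain ⟨j, y⟩ := w
  obtain rfl : j = i := fst_eq_of_reachable (ConnectedComponent.exact hw)
  exact Set.mem_range_self y

end disjointCliques

end DisjointCliques

/-- There exists a connected simple graph `G` with chromatic number `ω` (no proper coloring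
with finitely many colors, but a proper coloring with countably many colors) such that
`K_ω` is not a minor of `G`, i.e., there is no countably infinite family of nonempty,
connected, pairwise disjoint subsets of `V(G)` any two of which are connected to each other.
Hence Hadwiger's conjecture fails for graphs with infinite chromatic number. -/
theorem hadwiger_fails_for_infinite_chromatic_number :
    ∃ (V : Type) (G : SimpleGraph V),
      G.Connected ∧
      (∀ n : ℕ, ¬ G.Colorable n) ∧
      Nonempty (G.Coloring ℕ) ∧
      ¬ ∃ S : ℕ → Set V,
        (∀ n, (S n).Nonempty) ∧
        (∀ n, (G.induce (S n)).Connected) ∧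
        (∀ m n, m ≠ n → Disjoint (S m) (S n)) ∧
        (∀ m n, m ≠ n → ∃ s ∈ S m, ∃ t ∈ S n, G.Adj s t) := by
  let G := coneGraph (disjointCliques Fin)
  refine ⟨_, G, coneGraph.connected _, fun n hn ↦ ?_, ?_, ?_⟩
  · have hcard := disjointCliques.card_le_of_colorable (coneGraph.colorable_base hn) (n + 1)
    rw [Nat.card_fin] at hcard
    exact n.not_succ_le_self hcard
  · exact ⟨G.recolorOfEmbedding (Encodable.encode' _) G.selfColoring⟩
  · rintro ⟨S, hne, hconn, hdisj, hadj⟩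
    have hS : IsCompleteMinorModel G S :=
      ⟨hne, hconn, fun m n ↦ hdisj m n, fun m n ↦ hadj m n⟩
    have : Finite ℕ := hS.finite_of_finite_componentCompl (Set.finite_singleton none)
      (coneGraph.finite_componentCompl disjointCliques.finite_supp)
    exact not_finite ℕ
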